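/- (Hudson theorem for the wavefunction.) Let (ψ_n)_{n∈ℕ} be a sequence of complex numbers satisfying the energy bound Σ_{n≥0} s^n |ψ_n|² < ∞ for some s > 1, and let ψ : ℂ → ℂ be its extended wavefunction. Then ψ(z) ≠ 0 for every z ∈ ℂ if and only if there exist a, b, c ∈ ℂ with Re(a) > 0 such that ψ(z) = e^{-a z² + b z + c} for every z ∈ ℂ (i.e. if and only if ψ is a Gaussian wavefunction). -/

import Mathlib

open scoped BigOperators

/-- The `n`-th physicist Hermite polynomial evaluated at `z`:
`H_n(z) = 2^(n/2) He_n(z√2) = (√2)^n He_n(√2 z)`, with `He_n` the probabilist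
Hermite polynomial (Mathlib's `Polynomial.hermite n`). -/
noncomputable def physHermite (n : ℕ) (z : ℂ) : ℂ :=
  ((Real.sqrt 2 : ℝ) : ℂ) ^ n *
    Polynomial.aeval (((Real.sqrt 2 : ℝ) : ℂ) * z) (Polynomial.hermite n)

/-- The `n`-th term of the Hermite series of the wavefunction. -/
noncomputable def wfTerm (ψ : ℕ → ℂ) (z : ℂ) (n : ℕ) : ℂ :=
  ψ n * ((Real.sqrt (2 ^ n * n.factorial) : ℝ) : ℂ)⁻¹ * physHermite n z

/-- The extended wavefunction
`ψ(z) = π^(-1/4) e^(-z²/2) Σ_n ψ_n (2^n n!)^(-1/2) H_n(z)`. -/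
noncomputable def extWf (ψ : ℕ → ℂ) (z : ℂ) : ℂ :=
  ((Real.pi ^ ((1 : ℝ) / 4) : ℝ) : ℂ)⁻¹ * Complex.exp (-z ^ 2 / 2) * ∑' n, wfTerm ψ z n

/-!
A zero-free entire function bounded by `exp (C (1 + ‖z‖) ^ 2)` is the exponential of an entire
function whose real part grows at most quadratically, hence, by Borel–Carathéodory and the Cauchy
estimates, of a polynomial of degree at most two. Decay of `ψ` at both ends of the real line then
forces `0 < a.re`.

The growth bound, the differentiability and the decay of `ψ` all come from one estimate
`‖h_n(z)‖ ^ 2 ≤ K q ^ n exp (A (im z) ^ 2)` of the Hermite functions, valid for every `q > 1`. The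
Cauchy estimate for the generating function on the circle of radius `√x` bounds `‖h_n(z)‖ ^ 2 x ^ n`
by an exponential in `x`; integrating this against `exp (-r x)`, instead of optimizing in `x`,
produces the factorial that the normalization of `h_n` asks for without Stirling's formula. Choosing
`q < s`, the energy bound and the AM-GM inequality then give a summable majorant of the series.
-/

open Filter Topology Metric
open scoped Nat Polynomial

theorem exists_differentiable_forall_eq_cexp {f : ℂ → ℂ} (hf : Differentiable ℂ f)
    (hf₀ : ∀ z, f z ≠ 0) : ∃ g : ℂ → ℂ, Differentiable ℂ g ∧ ∀ z, f z = Complex.exp (g z) := by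
  obtain ⟨g, hg₀, hg⟩ := (hf.deriv.div hf hf₀).isExactOn_univ.with_val_at 0 (Complex.log (f 0))
  have hderiv (z : ℂ) : HasDerivAt (fun w ↦ f w * Complex.exp (-g w)) 0 z := by
    refine ((hf z).hasDerivAt.mul (hg z trivial).neg.cexp).congr_deriv ?_
    have := hf₀ z
    simp only [Pi.div_apply, Pi.neg_apply]
    field_simp
    ring
  refine ⟨g, fun z ↦ (hg z trivial).differentiableAt, fun z ↦ ?_⟩
  have hconst : f z * Complex.exp (-g z) = f 0 * Complex.exp (-g 0) :=
    is_const_of_deriv_eq_zero (fun w ↦ (hderiv w).differentiableAt) (fun w ↦ (hderiv w).deriv) z 0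
  rwa [Complex.exp_neg, Complex.exp_neg, hg₀, Complex.exp_log (hf₀ 0), mul_inv_cancel₀ (hf₀ 0),
    mul_inv_eq_one₀ (Complex.exp_ne_zero _)] at hconst

theorem norm_le_mul_one_add_norm_pow_of_re_le {g : ℂ → ℂ} (hg : Differentiable ℂ g) {C : ℝ}
    (hC : 0 < C) {d : ℕ} (hre : ∀ z, (g z).re ≤ C * (1 + ‖z‖) ^ d) (z : ℂ) :
    ‖g z‖ ≤ (2 * 2 ^ d * C + 3 * ‖g 0‖) * (1 + ‖z‖) ^ d := by
  have hz : 0 ≤ ‖z‖ := norm_nonneg z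
  set R : ℝ := 2 * ‖z‖ + 1 with hR
  set M : ℝ := C * (2 * (1 + ‖z‖)) ^ d with hM
  have hball : Set.MapsTo g (ball 0 R) {w | w.re ≤ M} := by
    intro w hw
    have hwR : 1 + ‖w‖ ≤ 2 * (1 + ‖z‖) := by linarith [mem_ball_zero_iff.mp hw, hR]
    exact (hre w).trans (by dsimp only [M]; gcongr)
  have hRz : 0 < R - ‖z‖ := by linarith [hR]
  calc ‖g z‖ ≤ 2 * M * ‖z‖ / (R - ‖z‖) + ‖g 0‖ * (R + ‖z‖) / (R - ‖z‖) :=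
        Complex.borelCaratheodory (by positivity) hg.differentiableOn hball (by positivity)
          (mem_ball_zero_iff.mpr (sub_pos.mp hRz))
    _ ≤ 2 * M + 3 * ‖g 0‖ := by
        gcongr
        · rw [div_le_iff₀ hRz]
          gcongr
          linarith
        · rw [div_le_iff₀ hRz]
          nlinarith [norm_nonneg (g 0)]
    _ ≤ 2 * M + 3 * ‖g 0‖ * (1 + ‖z‖) ^ d := by
        gcongr 2 * M + ?_
        exact le_mul_of_one_le_right (by positivity) (one_le_pow₀ (by linarith))
    _ = (2 * 2 ^ d * C + 3 * ‖g 0‖) * (1 + ‖z‖) ^ d := by rw [hM, mul_pow]; ring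

theorem iteratedDeriv_zero_eq_zero_of_norm_le_pow {E : Type*} [NormedAddCommGroup E]
    [NormedSpace ℂ E] [CompleteSpace E] {g : ℂ → E} (hg : Differentiable ℂ g) {C : ℝ} {d : ℕ}
    (hbound : ∀ z, ‖g z‖ ≤ C * (1 + ‖z‖) ^ d) {n : ℕ} (hn : d < n) :
    iteratedDeriv n g 0 = 0 := by
  have hC : 0 ≤ C := by simpa using (norm_nonneg _).trans (hbound 0)
  have hcauchy : ∀ᶠ R : ℝ in atTop,
      ‖iteratedDeriv n g 0‖ ≤ n ! * (C * 2 ^ d) * (R ^ d / R ^ n) := by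
    filter_upwards [eventually_ge_atTop 1] with R hR
    refine (Complex.norm_iteratedDeriv_le_of_forall_mem_sphere_norm_le (R := R)
      (C := C * (2 * R) ^ d) n (by positivity) hg.diffContOnCl
      fun z hz ↦ (hbound z).trans ?_).trans_eq ?_
    · rw [mem_sphere_zero_iff_norm.mp hz]
      gcongr
      linarith
    · rw [mul_pow]
      ring
  have hlim : Tendsto (fun R : ℝ ↦ n ! * (C * 2 ^ d) * (R ^ d / R ^ n)) atTop (𝓝 0) := by
    simpa using (tendsto_pow_div_pow_atTop_zero hn).const_mul (n ! * (C * 2 ^ d))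
  exact norm_le_zero_iff.mp (ge_of_tendsto hlim hcauchy)

theorem exists_polynomial_forall_eq_eval_of_norm_le_pow {g : ℂ → ℂ} (hg : Differentiable ℂ g)
    {C : ℝ} {d : ℕ} (hbound : ∀ z, ‖g z‖ ≤ C * (1 + ‖z‖) ^ d) :
    ∃ p : ℂ[X], p.natDegree ≤ d ∧ ∀ z, g z = p.eval z := by
  refine ⟨∑ n ∈ Finset.range (d + 1), .monomial n ((n ! : ℂ)⁻¹ * iteratedDeriv n g 0),
    Polynomial.natDegree_sum_le_of_forall_le _ _ fun n hn ↦
      (Polynomial.natDegree_monomial_le _).trans (Finset.mem_range_succ_iff.mp hn), fun z ↦ ?_⟩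
  rw [← Complex.taylorSeries_eq_of_entire' 0 z hg, tsum_eq_sum (s := Finset.range (d + 1)),
    Polynomial.eval_finsetSum]
  · simp
  · intro n hn
    rw [iteratedDeriv_zero_eq_zero_of_norm_le_pow hg hbound (by simpa using hn), mul_zero, zero_mul]

theorem exists_polynomial_forall_eq_cexp_eval {f : ℂ → ℂ} (hf : Differentiable ℂ f)
    (hf₀ : ∀ z, f z ≠ 0) {C : ℝ} (hC : 0 < C) {d : ℕ}
    (hgrowth : ∀ z, ‖f z‖ ≤ Real.exp (C * (1 + ‖z‖) ^ d)) :
    ∃ p : ℂ[X], p.natDegree ≤ d ∧ ∀ z, f z = Complex.exp (p.eval z) := by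
  obtain ⟨g, hg, hfg⟩ := exists_differentiable_forall_eq_cexp hf hf₀
  have hre (z : ℂ) : (g z).re ≤ C * (1 + ‖z‖) ^ d := by
    simpa [hfg, Complex.norm_exp] using hgrowth z
  obtain ⟨p, hp, hgp⟩ := exists_polynomial_forall_eq_eval_of_norm_le_pow hg
    (norm_le_mul_one_add_norm_pow_of_re_le hg hC hre)
  exact ⟨p, hp, fun z ↦ by rw [hfg, hgp]⟩

theorem re_pos_of_tendsto_cexp_quadratic {a b c : ℂ}
    (h : Tendsto (fun x : ℝ ↦ Complex.exp (-a * x ^ 2 + b * x + c)) (cocompact ℝ) (𝓝 0)) :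
    0 < a.re := by
  by_contra! ha
  have hprod : Tendsto (fun x : ℝ ↦ ‖Complex.exp (-a * x ^ 2 + b * x + c) *
      Complex.exp (-a * (-x : ℝ) ^ 2 + b * (-x : ℝ) + c)‖) (cocompact ℝ) (𝓝 0) := by
    simpa using (h.mul (h.comp (Homeomorph.neg ℝ).isClosedEmbedding.tendsto_cocompact)).norm
  have hlower (x : ℝ) : Real.exp (2 * c.re) ≤ ‖Complex.exp (-a * x ^ 2 + b * x + c) *
      Complex.exp (-a * (-x : ℝ) ^ 2 + b * (-x : ℝ) + c)‖ := by
    have hexp : -a * (x : ℂ) ^ 2 + b * x + c + (-a * (-x : ℝ) ^ 2 + b * (-x : ℝ) + c) =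
        (-2 * x ^ 2 : ℝ) * a + (2 : ℝ) * c := by push_cast; ring
    rw [← Complex.exp_add, hexp, Complex.norm_exp, Complex.add_re, Complex.re_ofReal_mul,
      Complex.re_ofReal_mul, Real.exp_le_exp]
    nlinarith [sq_nonneg x]
  exact (Real.exp_pos _).not_ge (ge_of_tendsto' hprod hlower)

theorem mul_factorial_div_pow_le_of_forall_mul_pow_le {a b c r : ℝ} {n : ℕ} (hr : 0 < r)
    (hcr : c < r) (h : ∀ x > 0, a * x ^ n ≤ b * Real.exp (c * x)) :
    a * (n ! / r ^ (n + 1)) ≤ b / (r - c) := by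
  have hgamma : ∫ x in Set.Ioi (0 : ℝ), a * (x ^ n * Real.exp (-r * x)) =
      a * (n ! / r ^ (n + 1)) := by
    rw [MeasureTheory.integral_const_mul]
    have := Real.integral_rpow_mul_exp_neg_mul_Ioi (a := n + 1) (by positivity) hr
    simp only [add_sub_cancel_right, Real.rpow_natCast, Real.Gamma_nat_eq_factorial] at this
    norm_cast at this
    simp only [neg_mul, this]
    ring
  have hexp : ∫ x in Set.Ioi (0 : ℝ), b * Real.exp ((c - r) * x) = b / (r - c) := by
    rw [MeasureTheory.integral_const_mul, integral_exp_mul_Ioi (sub_neg.mpr hcr), mul_zero,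
      Real.exp_zero, ← neg_sub r c, neg_div_neg_eq, mul_one_div]
  have hint : MeasureTheory.IntegrableOn (fun x : ℝ ↦ x ^ n * Real.exp (-r * x)) (Set.Ioi 0) := by
    simpa using integrableOn_rpow_mul_exp_neg_mul_rpow (s := n) (p := 1)
      (neg_one_lt_zero.trans_le n.cast_nonneg) one_pos hr
  rw [← hgamma, ← hexp]
  refine MeasureTheory.setIntegral_mono_on (hint.const_mul a)
    ((integrableOn_exp_mul_Ioi (sub_neg.mpr hcr) 0).const_mul b) measurableSet_Ioi fun x hx ↦ ?_
  calc a * (x ^ n * Real.exp (-r * x)) = a * x ^ n * Real.exp (-r * x) := by ring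
    _ ≤ b * Real.exp (c * x) * Real.exp (-r * x) :=
        mul_le_mul_of_nonneg_right (h x hx) (Real.exp_pos _).le
    _ = b * Real.exp ((c - r) * x) := by rw [mul_assoc, ← Real.exp_add]; ring_nf

theorem tendsto_cexp_neg_mul_sq_mul_eval_cocompact {b : ℂ} (hb : 0 < b.re) (p : ℂ[X]) :
    Tendsto (fun x : ℝ ↦ Complex.exp (-b * x ^ 2) * p.eval (x : ℂ)) (cocompact ℝ) (𝓝 0) := by
  have hmonomial (n : ℕ) :
      Tendsto (fun x : ℝ ↦ Complex.exp (-b * x ^ 2) * (x : ℂ) ^ n) (cocompact ℝ) (𝓝 0) := by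
    refine tendsto_zero_iff_norm_tendsto_zero.mpr
      ((tendsto_rpow_abs_mul_exp_neg_mul_sq_cocompact hb n).congr fun x ↦ ?_)
    rw [norm_mul, norm_pow, norm_cexp_neg_mul_sq, Complex.norm_real, Real.norm_eq_abs,
      Real.rpow_natCast, mul_comm]
  simp_rw [Polynomial.eval_eq_sum_range, Finset.mul_sum]
  rw [← Finset.sum_const_zero (s := Finset.range (p.natDegree + 1))]
  refine tendsto_finsetSum _ fun n _ ↦ ?_
  simpa [mul_left_comm] using (hmonomial n).const_mul (p.coeff n)

theorem iteratedDeriv_cexp_mul_sub_sq_div_two (w : ℂ) (n : ℕ) :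
    iteratedDeriv n (fun t : ℂ ↦ Complex.exp (w * t - t ^ 2 / 2)) =
      fun t ↦ Polynomial.aeval (w - t) (Polynomial.hermite n) *
        Complex.exp (w * t - t ^ 2 / 2) := by
  induction n with
  | zero => simp
  | succ n ih =>
    funext t
    have hhermite : HasDerivAt (fun t ↦ Polynomial.aeval (w - t) (Polynomial.hermite n))
        (-Polynomial.aeval (w - t) (Polynomial.hermite n).derivative) t := by
      simpa using (Polynomial.hasDerivAt_aeval (Polynomial.hermite n) (w - t)).comp_const_sub w t
    have hexponent : HasDerivAt (fun t ↦ w * t - t ^ 2 / 2) (w - t) t := by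
      refine (((hasDerivAt_id' t).const_mul w).fun_sub
        (((hasDerivAt_id' t).fun_pow 2).div_const 2)).congr_deriv ?_
      simp
    rw [iteratedDeriv_succ, ih, (hhermite.fun_mul hexponent.cexp).deriv, Polynomial.hermite_succ,
      map_sub, map_mul, Polynomial.aeval_X]
    ring

theorem iteratedDeriv_cexp_two_mul_sub_sq_zero (z : ℂ) (n : ℕ) :
    iteratedDeriv n (fun t : ℂ ↦ Complex.exp (2 * z * t - t ^ 2)) 0 = physHermite n z := by
  have hsqrt : ((√2 : ℝ) : ℂ) ^ 2 = 2 := by exact_mod_cast Real.sq_sqrt zero_le_two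
  have hrescale : (fun t : ℂ ↦ Complex.exp (2 * z * t - t ^ 2)) =
      fun t ↦ Complex.exp ((√2 : ℝ) * z * ((√2 : ℝ) * t) - ((√2 : ℝ) * t) ^ 2 / 2) := by
    funext t
    congr 1
    linear_combination (t ^ 2 / 2 - z * t) * hsqrt
  rw [hrescale, iteratedDeriv_comp_const_mul (f := fun t ↦
    Complex.exp ((√2 : ℝ) * z * t - t ^ 2 / 2)) (by fun_prop),
    iteratedDeriv_cexp_mul_sub_sq_div_two]
  simp [physHermite]

theorem exists_polynomial_physHermite_eq_eval (n : ℕ) :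
    ∃ p : ℂ[X], physHermite n = fun z ↦ p.eval z := by
  refine ⟨.C ((√2 : ℝ) ^ n : ℂ) * ((Polynomial.hermite n).map (Int.castRingHom ℂ)).comp
    (.C ((√2 : ℝ) : ℂ) * .X), funext fun z ↦ ?_⟩
  simp [physHermite, Polynomial.aeval_def, Polynomial.eval_map]

theorem differentiable_physHermite (n : ℕ) : Differentiable ℂ (physHermite n) := by
  obtain ⟨p, hp⟩ := exists_polynomial_physHermite_eq_eval n
  exact hp ▸ p.differentiable

/-- The `n`-th Hermite function `π^(-1/4) (2^n n!)^(-1/2) e^(-z²/2) H_n(z)`, extended to the complex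
plane; on the real line these are the orthonormal eigenfunctions of the harmonic oscillator. -/
noncomputable def hermiteFunction (n : ℕ) (z : ℂ) : ℂ :=
  ((Real.pi ^ ((1 : ℝ) / 4) * √(2 ^ n * n !) : ℝ) : ℂ)⁻¹ *
    (Complex.exp (-z ^ 2 / 2) * physHermite n z)

theorem extWf_eq_tsum (ψ : ℕ → ℂ) (z : ℂ) : extWf ψ z = ∑' n, ψ n * hermiteFunction n z := by
  rw [extWf, ← tsum_mul_left]
  congr 1 with n
  simp only [wfTerm, hermiteFunction, Complex.ofReal_mul, mul_inv]
  ring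

theorem differentiable_hermiteFunction (n : ℕ) : Differentiable ℂ (hermiteFunction n) := by
  have := differentiable_physHermite n
  unfold hermiteFunction
  fun_prop

theorem tendsto_hermiteFunction_cocompact (n : ℕ) :
    Tendsto (fun x : ℝ ↦ hermiteFunction n x) (cocompact ℝ) (𝓝 0) := by
  obtain ⟨p, hp⟩ := exists_polynomial_physHermite_eq_eval n
  have hgauss := tendsto_cexp_neg_mul_sq_mul_eval_cocompact (b := 1 / 2) (by norm_num) p
  simpa [hermiteFunction, hp, neg_div, div_eq_inv_mul] using hgauss.const_mul
    ((Real.pi ^ ((1 : ℝ) / 4) * √(2 ^ n * n !) : ℝ) : ℂ)⁻¹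

theorem re_neg_sq_div_two_add_two_mul_mul_sub_sq_le {ε : ℝ} (hε : 0 < ε) (z t : ℂ) :
    (-z ^ 2 / 2 + (2 * z * t - t ^ 2)).re ≤ (1 + ε) * ‖t‖ ^ 2 + (1 / 2 + 1 / ε) * z.im ^ 2 := by
  have hyoung : -(2 * z.im * t.im) ≤ ε * t.im ^ 2 + 1 / ε * z.im ^ 2 := by
    simpa [mul_right_comm] using two_mul_le_add_mul_sq (a := -t.im) (b := z.im) hε
  have hre : (-z ^ 2 / 2 + (2 * z * t - t ^ 2)).re = -(z.re - 2 * t.re) ^ 2 / 2 + t.re ^ 2 +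
      t.im ^ 2 + z.im ^ 2 / 2 - 2 * z.im * t.im := by
    simp [sq]
    ring
  rw [hre, Complex.sq_norm, Complex.normSq_apply]
  nlinarith [sq_nonneg (z.re - 2 * t.re), mul_nonneg hε.le (sq_nonneg t.re)]

theorem norm_cexp_mul_physHermite_mul_pow_le {ε : ℝ} (hε : 0 < ε) (n : ℕ) (z : ℂ) {ρ : ℝ}
    (hρ : 0 < ρ) : ‖Complex.exp (-z ^ 2 / 2) * physHermite n z‖ * ρ ^ n ≤
      n ! * Real.exp ((1 + ε) * ρ ^ 2 + (1 / 2 + 1 / ε) * z.im ^ 2) := by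
  rw [← le_div_iff₀ (by positivity), ← iteratedDeriv_cexp_two_mul_sub_sq_zero,
    ← iteratedDeriv_const_mul_field]
  simp_rw [← Complex.exp_add]
  refine Complex.norm_iteratedDeriv_le_of_forall_mem_sphere_norm_le n hρ
    (Differentiable.diffContOnCl (by fun_prop)) fun t ht ↦ ?_
  rw [Complex.norm_exp, Real.exp_le_exp, ← mem_sphere_zero_iff_norm.mp ht]
  exact re_neg_sq_div_two_add_two_mul_mul_sub_sq_le hε z t

theorem norm_cexp_mul_physHermite_sq_le {ε : ℝ} (hε : 0 < ε) (n : ℕ) (z : ℂ) :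
    ‖Complex.exp (-z ^ 2 / 2) * physHermite n z‖ ^ 2 ≤
      2 ^ n * n ! * ((1 + 2 * ε) ^ (n + 1) / ε * Real.exp ((1 + 2 / ε) * z.im ^ 2)) := by
  set G := ‖Complex.exp (-z ^ 2 / 2) * physHermite n z‖
  have hcauchy (x : ℝ) (hx : 0 < x) : G ^ 2 * x ^ n ≤
      n ! ^ 2 * Real.exp ((1 + 2 / ε) * z.im ^ 2) * Real.exp (2 * (1 + ε) * x) := by
    have hsq : (√x) ^ 2 = x := Real.sq_sqrt hx.le
    calc G ^ 2 * x ^ n = (G * (√x) ^ n) ^ 2 := by rw [mul_pow, pow_right_comm, hsq]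
      _ ≤ (n ! * Real.exp ((1 + ε) * √x ^ 2 + (1 / 2 + 1 / ε) * z.im ^ 2)) ^ 2 :=
        pow_le_pow_left₀ (by positivity)
          (norm_cexp_mul_physHermite_mul_pow_le hε n z (Real.sqrt_pos.mpr hx)) 2
      _ = _ := by
        rw [hsq, mul_pow, ← Real.exp_nat_mul, mul_assoc, ← Real.exp_add]
        congr 2
        push_cast
        ring
  have hlaplace := mul_factorial_div_pow_le_of_forall_mul_pow_le (r := 2 * (1 + 2 * ε))
    (by positivity) (by linarith) hcauchy
  have hfact : (0 : ℝ) < n ! := by positivity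
  rw [← mul_div_assoc, div_le_div_iff₀ (by positivity) (by linarith)] at hlaplace
  refine le_of_mul_le_mul_right ?_ (mul_pos (mul_pos two_pos hε) hfact)
  calc _ = G ^ 2 * n ! * (2 * (1 + 2 * ε) - 2 * (1 + ε)) := by ring
    _ ≤ _ := hlaplace
    _ = _ := by rw [mul_pow]; field_simp; ring

theorem norm_hermiteFunction_sq_le {ε : ℝ} (hε : 0 < ε) (n : ℕ) (z : ℂ) :
    ‖hermiteFunction n z‖ ^ 2 ≤
      (1 + 2 * ε) ^ (n + 1) / ε * Real.exp ((1 + 2 / ε) * z.im ^ 2) := by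
  have hpi : 1 ≤ (Real.pi ^ ((1 : ℝ) / 4)) ^ 2 :=
    one_le_pow₀ (Real.one_le_rpow (by linarith [Real.pi_gt_three]) (by norm_num))
  have hnorm : ‖hermiteFunction n z‖ ^ 2 = ‖Complex.exp (-z ^ 2 / 2) * physHermite n z‖ ^ 2 /
      ((Real.pi ^ ((1 : ℝ) / 4)) ^ 2 * (2 ^ n * n !)) := by
    rw [hermiteFunction, norm_mul, mul_pow, norm_inv, Complex.norm_real, Real.norm_eq_abs,
      inv_pow, sq_abs, mul_pow, Real.sq_sqrt (by positivity), inv_mul_eq_div]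
  rw [hnorm]
  calc _ ≤ ‖Complex.exp (-z ^ 2 / 2) * physHermite n z‖ ^ 2 / (2 ^ n * n !) :=
        div_le_div_of_nonneg_left (by positivity) (by positivity)
          (le_mul_of_one_le_left (by positivity) hpi)
    _ ≤ _ := by
      rw [div_le_iff₀' (by positivity)]
      exact norm_cexp_mul_physHermite_sq_le hε n z

theorem differentiable_tsum_of_norm_le_mul {ι E : Type*} [NormedAddCommGroup E] [NormedSpace ℂ E]
    [CompleteSpace E] {F : ι → ℂ → E} {u : ι → ℝ} {G : ℂ → ℝ} (hu : Summable u) (hu₀ : 0 ≤ u)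
    (hG : Continuous G) (hF : ∀ i, Differentiable ℂ (F i)) (hFu : ∀ i z, ‖F i z‖ ≤ u i * G z) :
    Differentiable ℂ fun z ↦ ∑' i, F i z := by
  intro z
  have hopen : IsOpen {w | G w < G z + 1} := isOpen_lt hG continuous_const
  have hdiff := Complex.differentiableOn_tsum_of_summable_norm (hu.mul_right (G z + 1))
    (fun i ↦ (hF i).differentiableOn) hopen
    fun i w hw ↦ (hFu i w).trans (mul_le_mul_of_nonneg_left hw.le (hu₀ i))
  exact hdiff.differentiableAt (hopen.mem_nhds (lt_add_one (G z)))

section EnergyBound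

variable {ψ : ℕ → ℂ} {s : ℝ}

theorem exists_summable_norm_mul_hermiteFunction_le (hs : 1 < s)
    (hE : Summable fun n ↦ s ^ n * ‖ψ n‖ ^ 2) :
    ∃ (u : ℕ → ℝ) (A : ℝ), Summable u ∧ 0 ≤ u ∧ 0 ≤ A ∧
      ∀ n z, ‖ψ n * hermiteFunction n z‖ ≤ u n * Real.exp (A * z.im ^ 2) := by
  obtain ⟨ε, hε, hεs⟩ : ∃ ε > 0, 1 + 2 * ε < s := ⟨(s - 1) / 4, by linarith, by linarith⟩
  have hs₀ : 0 < s := one_pos.trans hs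
  refine ⟨fun n ↦ s ^ n * ‖ψ n‖ ^ 2 + (1 + 2 * ε) / ε * ((1 + 2 * ε) / s) ^ n, 1 + 2 / ε, ?_,
    fun n ↦ by simp only [Pi.zero_apply]; positivity, by positivity, fun n z ↦ ?_⟩
  · exact hE.add ((summable_geometric_of_lt_one (by positivity)
      ((div_lt_one hs₀).mpr hεs)).mul_left _)
  · have hexp : 1 ≤ Real.exp ((1 + 2 / ε) * z.im ^ 2) := Real.one_le_exp (by positivity)
    calc ‖ψ n * hermiteFunction n z‖ ≤ s ^ n * ‖ψ n‖ ^ 2 + ‖hermiteFunction n z‖ ^ 2 / s ^ n := by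
          rw [norm_mul, div_eq_inv_mul]
          have hyoung := two_mul_le_add_mul_sq (a := ‖ψ n‖) (b := ‖hermiteFunction n z‖)
            (pow_pos hs₀ n)
          have hnonneg : 0 ≤ ‖ψ n‖ * ‖hermiteFunction n z‖ := by positivity
          linarith
      _ ≤ s ^ n * ‖ψ n‖ ^ 2 * Real.exp ((1 + 2 / ε) * z.im ^ 2) +
          (1 + 2 * ε) ^ (n + 1) / ε * Real.exp ((1 + 2 / ε) * z.im ^ 2) / s ^ n :=
        add_le_add (le_mul_of_one_le_right (by positivity) hexp)
          (div_le_div_of_nonneg_right (norm_hermiteFunction_sq_le hε n z) (by positivity))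
      _ = _ := by
        simp only [div_pow]
        ring

theorem differentiable_extWf (hs : 1 < s) (hE : Summable fun n ↦ s ^ n * ‖ψ n‖ ^ 2) :
    Differentiable ℂ (extWf ψ) := by
  obtain ⟨u, A, hu, hu₀, -, hbound⟩ := exists_summable_norm_mul_hermiteFunction_le hs hE
  rw [funext (extWf_eq_tsum ψ)]
  exact differentiable_tsum_of_norm_le_mul hu hu₀
    (G := fun z ↦ Real.exp (A * z.im ^ 2)) (by fun_prop)
    (fun n ↦ (differentiable_hermiteFunction n).const_mul (ψ n)) hbound

theorem exists_norm_extWf_le (hs : 1 < s) (hE : Summable fun n ↦ s ^ n * ‖ψ n‖ ^ 2) :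
    ∃ C > 0, ∀ z, ‖extWf ψ z‖ ≤ Real.exp (C * (1 + ‖z‖) ^ 2) := by
  obtain ⟨u, A, hu, hu₀, hA, hbound⟩ := exists_summable_norm_mul_hermiteFunction_le hs hE
  have hU : 0 ≤ ∑' n, u n := tsum_nonneg hu₀
  refine ⟨∑' n, u n + A + 1, by positivity, fun z ↦ ?_⟩
  have him : z.im ^ 2 ≤ ‖z‖ ^ 2 := sq_le_sq.mpr (by simpa using Complex.abs_im_le_norm z)
  calc ‖extWf ψ z‖ ≤ (∑' n, u n) * Real.exp (A * z.im ^ 2) := by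
        rw [extWf_eq_tsum]
        exact tsum_of_norm_bounded (hu.hasSum.mul_right _) (hbound · z)
    _ ≤ Real.exp (∑' n, u n) * Real.exp (A * z.im ^ 2) := by
        gcongr
        linarith [Real.add_one_le_exp (∑' n, u n)]
    _ ≤ Real.exp ((∑' n, u n + A + 1) * (1 + ‖z‖) ^ 2) := by
        rw [← Real.exp_add, Real.exp_le_exp]
        nlinarith [norm_nonneg z, mul_nonneg hU (norm_nonneg z), mul_nonneg hA (norm_nonneg z)]

theorem tendsto_extWf_cocompact (hs : 1 < s) (hE : Summable fun n ↦ s ^ n * ‖ψ n‖ ^ 2) :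
    Tendsto (fun x : ℝ ↦ extWf ψ x) (cocompact ℝ) (𝓝 0) := by
  obtain ⟨u, A, hu, -, -, hbound⟩ := exists_summable_norm_mul_hermiteFunction_le hs hE
  simp_rw [extWf_eq_tsum]
  rw [← tsum_zero (β := ℕ)]
  refine tendsto_tsum_of_dominated_convergence hu (fun n ↦ ?_) (.of_forall fun x n ↦ ?_)
  · simpa using (tendsto_hermiteFunction_cocompact n).const_mul (ψ n)
  · simpa using hbound n x

end EnergyBound

/-- **Hudson theorem for the wavefunction.** Under the energy bound
`Σ s^n |ψ_n|² < ∞` for some `s > 1`, the extended wavefunction is nowhere zero on `ℂ`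
if and only if it is a Gaussian wavefunction `z ↦ e^(-a z² + b z + c)` with `Re(a) > 0`. -/
theorem hudson_wavefunction (ψ : ℕ → ℂ) (s : ℝ) (hs : 1 < s)
    (hE : Summable fun n => s ^ n * ‖ψ n‖ ^ 2) :
    (∀ z : ℂ, extWf ψ z ≠ 0) ↔
      ∃ a b c : ℂ, 0 < a.re ∧
        ∀ z : ℂ, extWf ψ z = Complex.exp (-a * z ^ 2 + b * z + c) := by
  constructor
  · intro hne
    obtain ⟨C, hC, hgrowth⟩ := exists_norm_extWf_le hs hE
    obtain ⟨p, hdeg, hp⟩ :=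
      exists_polynomial_forall_eq_cexp_eval (differentiable_extWf hs hE) hne hC hgrowth
    have hgauss (z : ℂ) : extWf ψ z =
        Complex.exp (-(-p.coeff 2) * z ^ 2 + p.coeff 1 * z + p.coeff 0) := by
      rw [hp, Polynomial.eval_eq_sum_range' (Nat.lt_succ_of_le hdeg)]
      simp only [Finset.sum_range_succ, Finset.sum_range_zero]
      ring_nf
    have hdecay := (tendsto_extWf_cocompact hs hE).congr fun x : ℝ ↦ hgauss x
    exact ⟨-p.coeff 2, p.coeff 1, p.coeff 0, re_pos_of_tendsto_cexp_quadratic hdecay, hgauss⟩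
  · rintro ⟨a, b, c, -, h⟩ z
    rw [h]
    exact Complex.exp_ne_zero _
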